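/- arXiv:1011.0376 — 2 statements merged into one kernel-verified Lean document; each statement's English description precedes it below -/
import Mathlib

section
/- Let R be a commutative noetherian ring and let S₁ and S₂ be Serre classes of R-modules. Suppose that every module in S₂ embeds into an injective R-module that belongs to S₂ (S₂ is closed under injective hulls). Then the extension class (S₁, S₂) is a Serre class; in particular it is closed under extensions. -/
/-!
The extension step carries all the content. Given an exact sequence `0 → L → M → N → 0` with
`L₁ ≤ L` and `N₁ ≤ N` in `S₁` and `L ⧸ L₁`, `N ⧸ N₁` in `S₂`, embed `L ⧸ L₁` into an injective
module `E` in `S₂` and extend `L → L ⧸ L₁ → E` to `φ : M → E`. Let `K` be the kernel of the map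
`M → E × N ⧸ N₁` given by `φ` and by `M → N → N ⧸ N₁`. Then `M ⧸ K` embeds into
`E × N ⧸ N₁`, which is in `S₂`, and `K` is an extension of a submodule of `N₁` by `L₁`: an element
of `K` killed by `M → N` comes from some `l : L` with `φ l = 0`, that is, from `l ∈ L₁`.
-/

universe u v

/-- The extension class `(S₁, S₂)`: modules `M` admitting a submodule `N ∈ S₁` with `M/N ∈ S₂`. -/
def ExtensionClass {R : Type u} [CommRing R]
    (S₁ S₂ : ∀ (M : Type v) [AddCommGroup M] [Module R M], Prop)
    (M : Type v) [AddCommGroup M] [Module R M] : Prop :=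
  ∃ N : Submodule R M, S₁ N ∧ S₂ (M ⧸ N)

/-- A Serre class of `R`-modules. -/
structure IsSerreClass (R : Type u) [CommRing R]
    (S : ∀ (M : Type v) [AddCommGroup M] [Module R M], Prop) : Prop where
  isoClosed : ∀ (M N : Type v) [AddCommGroup M] [Module R M] [AddCommGroup N] [Module R N],
      (M ≃ₗ[R] N) → S M → S N
  zeroMem : ∀ (M : Type v) [AddCommGroup M] [Module R M], Subsingleton M → S M
  subClosed : ∀ (M : Type v) [AddCommGroup M] [Module R M] (N : Submodule R M), S M → S N
  quotClosed : ∀ (M : Type v) [AddCommGroup M] [Module R M] (N : Submodule R M), S M → S (M ⧸ N)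
  extClosed : ∀ (L M N : Type v) [AddCommGroup L] [Module R L] [AddCommGroup M] [Module R M]
      [AddCommGroup N] [Module R N] (f : L →ₗ[R] M) (g : M →ₗ[R] N),
      Function.Injective f → Function.Surjective g →
      LinearMap.range f = LinearMap.ker g → S L → S N → S M

section SerreClass

variable {R : Type u} [CommRing R] {S : ∀ (M : Type v) [AddCommGroup M] [Module R M], Prop}

theorem IsSerreClass.of_injective (h : IsSerreClass R S) {M N : Type v} [AddCommGroup M]
    [Module R M] [AddCommGroup N] [Module R N] (f : M →ₗ[R] N) (hf : Function.Injective f)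
    (hN : S N) : S M :=
  h.isoClosed _ _ (LinearEquiv.ofInjective f hf).symm (h.subClosed N (LinearMap.range f) hN)

theorem IsSerreClass.of_surjective (h : IsSerreClass R S) {M N : Type v} [AddCommGroup M]
    [Module R M] [AddCommGroup N] [Module R N] (f : M →ₗ[R] N) (hf : Function.Surjective f)
    (hM : S M) : S N :=
  h.isoClosed _ _ (f.quotKerEquivOfSurjective hf) (h.quotClosed M (LinearMap.ker f) hM)

theorem IsSerreClass.prod (h : IsSerreClass R S) {M N : Type v} [AddCommGroup M]
    [Module R M] [AddCommGroup N] [Module R N] (hM : S M) (hN : S N) : S (M × N) :=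
  h.extClosed M (M × N) N (LinearMap.inl R M N) (LinearMap.snd R M N) LinearMap.inl_injective
    LinearMap.snd_surjective (LinearMap.range_inl R M N) hM hN

theorem IsSerreClass.quot_ker (h : IsSerreClass R S) {M N : Type v} [AddCommGroup M]
    [Module R M] [AddCommGroup N] [Module R N] (f : M →ₗ[R] N) (hN : S N) :
    S (M ⧸ LinearMap.ker f) :=
  h.isoClosed _ _ f.quotKerEquivRange.symm (h.subClosed N (LinearMap.range f) hN)

end SerreClass

section ExtensionClass

variable {R : Type u} [CommRing R] {S₁ S₂ : ∀ (M : Type v) [AddCommGroup M] [Module R M], Prop}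

theorem ExtensionClass.of_injective (h₁ : IsSerreClass R S₁) (h₂ : IsSerreClass R S₂)
    {M N : Type v} [AddCommGroup M] [Module R M] [AddCommGroup N] [Module R N] (f : M →ₗ[R] N)
    (hf : Function.Injective f) (hN : ExtensionClass S₁ S₂ N) : ExtensionClass S₁ S₂ M := by
  obtain ⟨K, hK, hK'⟩ := hN
  refine ⟨LinearMap.ker (K.mkQ ∘ₗ f), ?_, h₂.quot_ker _ hK'⟩
  have hmem : ∀ x ∈ LinearMap.ker (K.mkQ ∘ₗ f), f x ∈ K := fun x hx => by simpa using hx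
  refine h₁.of_injective (f.restrict hmem) (fun x y hxy => Subtype.ext (hf ?_)) hK
  exact congrArg Subtype.val hxy

theorem ExtensionClass.of_surjective (h₁ : IsSerreClass R S₁) (h₂ : IsSerreClass R S₂)
    {M N : Type v} [AddCommGroup M] [Module R M] [AddCommGroup N] [Module R N] (f : M →ₗ[R] N)
    (hf : Function.Surjective f) (hM : ExtensionClass S₁ S₂ M) : ExtensionClass S₁ S₂ N := by
  obtain ⟨K, hK, hK'⟩ := hM
  refine ⟨K.map f, h₁.of_surjective (f.submoduleMap K) (f.submoduleMap_surjective K) hK, ?_⟩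
  refine h₂.of_surjective (K.mapQ (K.map f) f (Submodule.le_comap_map f K)) ?_ hK'
  intro y
  obtain ⟨n, rfl⟩ := Submodule.mkQ_surjective _ y
  obtain ⟨m, rfl⟩ := hf n
  exact ⟨K.mkQ m, rfl⟩

/-- The submodule of `M` is the kernel of `M → E × N ⧸ N₁`, where `E` is an injective module of
`S₂` containing `L ⧸ L₁`. -/
theorem ExtensionClass.of_exact (h₁ : IsSerreClass R S₁) (h₂ : IsSerreClass R S₂)
    (hinj : ∀ (M : Type v) [AddCommGroup M] [Module R M], S₂ M →
      ∃ E : ModuleCat.{v} R, Module.Injective R E ∧ S₂ E ∧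
        ∃ f : M →ₗ[R] E, Function.Injective f)
    {L M N : Type v} [AddCommGroup L] [Module R L] [AddCommGroup M] [Module R M]
    [AddCommGroup N] [Module R N] (f : L →ₗ[R] M) (g : M →ₗ[R] N) (hf : Function.Injective f)
    (hfg : LinearMap.range f = LinearMap.ker g) (hL : ExtensionClass S₁ S₂ L)
    (hN : ExtensionClass S₁ S₂ N) : ExtensionClass S₁ S₂ M := by
  obtain ⟨L₁, hL₁, hL₂⟩ := hL
  obtain ⟨N₁, hN₁, hN₂⟩ := hN
  obtain ⟨E, hE, hSE, i, hi⟩ := hinj _ hL₂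
  obtain ⟨φ, hφ⟩ := hE.out f hf (i ∘ₗ L₁.mkQ)
  set K := LinearMap.ker (φ.prod (N₁.mkQ ∘ₗ g)) with hKdef
  have hmemK : ∀ m, m ∈ K ↔ φ m = 0 ∧ g m ∈ N₁ := fun m => by simp [hKdef]
  have hgf : ∀ l, g (f l) = 0 := fun l => by
    rw [← LinearMap.mem_ker, ← hfg]
    exact LinearMap.mem_range_self f l
  have hφf : ∀ l, φ (f l) = 0 ↔ l ∈ L₁ := fun l => by
    rw [hφ l, LinearMap.comp_apply, map_eq_zero_iff i hi, Submodule.mkQ_apply,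
      Submodule.Quotient.mk_eq_zero]
  have hfK : ∀ l ∈ L₁, f l ∈ K := fun l hl =>
    (hmemK _).2 ⟨(hφf l).2 hl, by rw [hgf]; exact N₁.zero_mem⟩
  let gK : K →ₗ[R] N₁ := g.restrict fun m hm => ((hmemK m).1 hm).2
  refine ⟨K, ?_, h₂.quot_ker _ (h₂.prod hSE hN₂)⟩
  refine h₁.extClosed L₁ K (LinearMap.range gK) (f.restrict hfK) gK.rangeRestrict
    (fun x y hxy => Subtype.ext (hf (congrArg Subtype.val hxy))) gK.surjective_rangeRestrict
    ?_ hL₁ (h₁.subClosed N₁ _ hN₁)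
  rw [LinearMap.ker_rangeRestrict]
  ext ⟨m, hm⟩
  constructor
  · rintro ⟨⟨l, hl⟩, hlm⟩
    have hlm' : f l = m := congrArg Subtype.val hlm
    exact Subtype.ext (show g m = 0 by rw [← hlm', hgf])
  · intro hgm
    have hgm' : m ∈ LinearMap.ker g := congrArg Subtype.val hgm
    rw [← hfg] at hgm'
    obtain ⟨l, rfl⟩ := hgm'
    exact ⟨⟨l, (hφf l).1 ((hmemK _).1 hm).1⟩, rfl⟩

end ExtensionClass

/-- If every module of the Serre class `S₂` embeds into an injective module belonging to `S₂`
(i.e. `S₂` is closed under injective hulls), then the extension class `(S₁, S₂)` is a Serre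
class; in particular it is closed under extensions. -/
theorem extensionClass_isSerreClass_of_injective_hulls
    {R : Type u} [CommRing R] [IsNoetherianRing R]
    (S₁ S₂ : ∀ (M : Type v) [AddCommGroup M] [Module R M], Prop)
    (h₁ : IsSerreClass R S₁) (h₂ : IsSerreClass R S₂)
    (hinj : ∀ (M : Type v) [AddCommGroup M] [Module R M], S₂ M →
      ∃ E : ModuleCat.{v} R, Module.Injective R E ∧ S₂ E ∧
        ∃ f : M →ₗ[R] E, Function.Injective f) :
    IsSerreClass R (ExtensionClass S₁ S₂) := by
  exact
    { isoClosed := fun _ _ _ _ _ _ e => ExtensionClass.of_surjective h₁ h₂ e.toLinearMap e.surjective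
      zeroMem := fun M _ _ _ =>
        ⟨⊥, h₁.zeroMem _ inferInstance, h₂.zeroMem _ (Submodule.mkQ_surjective ⊥).subsingleton⟩
      subClosed := fun _ _ _ N => ExtensionClass.of_injective h₁ h₂ N.subtype N.injective_subtype
      quotClosed := fun _ _ _ N => ExtensionClass.of_surjective h₁ h₂ N.mkQ N.mkQ_surjective
      extClosed := fun _ _ _ _ _ _ _ _ _ f g hf _ => ExtensionClass.of_exact h₁ h₂ hinj f g hf }
end

section
/- Let (R, m) be a commutative noetherian local ring, I an ideal of R, and S₁, S₂ Serre classes of R-modules each containing a nonzero module. Suppose the extension class (S₁, S₂) satisfies condition (C_I). Then for every finitely generated R-module M with n = dim M (the Krull dimension of the support of M), the local cohomology module H^n_I(M) belongs to (S₁, S₂). -/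
/-!
The proof is by induction on a bound `n` for `dim M`, with `H^n_I(M)` in the conclusion.

For `n = 0` the module `M` has finite length, and `H^0_I(M)` embeds in `M`. A Serre class with a
nonzero member contains the residue field, hence all modules of finite length.

For the step to `n + 1`, let `L = M / Γ_I(M)`. As `Γ_I(M)` is killed by a power of `I`, it has no
local cohomology in positive degree (`HH_eq_zero`), so `H^{n+1}_I(M)` embeds in `H^{n+1}_I(L)`.
Some `x ∈ I` is a nonzerodivisor on `L` (`exists_regular`), and `dim L / xL ≤ n`. The exact sequence
`H^n_I(L / xL) → H^{n+1}_I(L) → H^{n+1}_I(L)`, with second map multiplication by `x`, shows that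
`(0 : I)` in `H^{n+1}_I(L)` is a submodule of a quotient of `H^n_I(L / xL)`, so it belongs to
`(S₁, S₂)`. Since `H^{n+1}_I(L)` is `I`-torsion, `(C_I)` gives `H^{n+1}_I(L) ∈ (S₁, S₂)`
(`HH_mem_of_regular`).

Mathlib defines `localCohomology` as a colimit of derived functors `Ext(R / I ^ t, -)`, for which
there are no long exact sequences. They are available for the derived-category version
`Abelian.Ext`. The two are compared naturally in the first variable (`extEquiv`), so that
`localCohomology` is the direct limit `HH` of the groups `Abelian.Ext (R / I ^ t) M n` (`lcEquiv`),
on which exactness and torsion statements are checked at a finite stage. The vanishing `HH_eq_zero`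
comes from Artin–Rees instead of a theory of injective hulls.
-/

universe u v

/-- A class `X` of `R`-modules satisfies condition `(C_I)`: whenever every element of `M` is
annihilated by some power of `I` and the submodule `(0 :_M I)` belongs to `X`,
then `M` belongs to `X`. -/
def SatisfiesCondC {R : Type u} [CommRing R] (I : Ideal R)
    (X : ∀ (M : Type u) [AddCommGroup M] [Module R M], Prop) : Prop :=
  ∀ (M : Type u) [AddCommGroup M] [Module R M],
    (∀ x : M, ∃ n : ℕ, ∀ r ∈ I ^ n, r • x = 0) →
    ∀ K : Submodule R M, (∀ x : M, x ∈ K ↔ ∀ r ∈ I, r • x = 0) →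
    X K → X M

section
open CategoryTheory Limits Opposite

namespace LCTop
variable {R : Type u} [CommRing R]

/-! ### The two versions of Ext -/

section Compare
variable {X : ModuleCat.{u} R} (P : ProjectiveResolution X) (Y : ModuleCat.{u} R) (n : ℕ)

/-- The complex `Hom(P, Y)`, written as a chain complex in the opposite category: Mathlib's `Ext`
functor is the left derived functor of `Hom(-, Y)` with values in that category. -/
noncomputable abbrev homCx : ChainComplex (ModuleCat.{u} R)ᵒᵖ ℕ :=
  (((linearYoneda R (ModuleCat.{u} R)).obj Y).rightOp.mapHomologicalComplex _).obj P.complex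

/-- The inclusion of the module of `n`-cocycles of `Hom(P, Y)` into `Hom(Pₙ, Y)`; cocycles of
`Hom(P, Y)` are opcycles of `homCx P Y`. -/
noncomputable def cocycleIncl : (unop ((homCx P Y).opcycles n) : ModuleCat R) →ₗ[R] (P.complex.X n ⟶ Y) :=
  ((homCx P Y).pOpcycles n).unop.hom

/-- The projection of `n`-cocycles of `Hom(P, Y)` onto cohomology. -/
noncomputable def cocycleProj : (unop ((homCx P Y).opcycles n) : ModuleCat R) →ₗ[R] (unop ((homCx P Y).homology n) : ModuleCat R) :=
  ((homCx P Y).homologyι n).unop.hom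

lemma cocycleIncl_injective : Function.Injective (cocycleIncl P Y n) :=
  (ModuleCat.mono_iff_injective _).1 (inferInstanceAs (Mono ((homCx P Y).pOpcycles n).unop))

lemma cocycleProj_surjective : Function.Surjective (cocycleProj P Y n) :=
  (ModuleCat.epi_iff_surjective _).1 (inferInstanceAs (Epi ((homCx P Y).homologyι n).unop))

lemma d_cocycleIncl (z) : P.complex.d (n+1) n ≫ cocycleIncl P Y n z = 0 := by
  have h := (homCx P Y).d_pOpcycles (n+1) n
  have h2 := congr_arg (fun f => (ModuleCat.Hom.hom (Quiver.Hom.unop f)) z) h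
  exact h2

lemma exists_cocycleIncl (f : P.complex.X n ⟶ Y) (hf : P.complex.d (n+1) n ≫ f = 0) :
    ∃ z, cocycleIncl P Y n z = f := by
  have h : (ShortComplex.mk _ _ ((homCx P Y).d_pOpcycles (n+1) n)).Exact :=
    ShortComplex.exact_of_g_is_cokernel _
      ((homCx P Y).opcyclesIsCokernel (n+1) n (by simp))
  have h2 := h.unop
  rw [ShortComplex.moduleCat_exact_iff] at h2
  exact h2 f hf

lemma cocycleProj_eq_zero_iff_succ (z) : cocycleProj P Y (n+1) z = 0 ↔
    ∃ g : P.complex.X n ⟶ Y, P.complex.d (n+1) n ≫ g = cocycleIncl P Y (n+1) z := by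
  have h0 := (homCx P Y).homologyι_comp_fromOpcycles (n+1) n
  have h : (ShortComplex.mk _ _ h0).Exact :=
    ShortComplex.exact_of_f_is_kernel _
      ((homCx P Y).homologyIsKernel (n+1) n (by simp))
  have h2 := h.unop
  rw [ShortComplex.moduleCat_exact_iff] at h2
  have h3 (g : P.complex.X n ⟶ Y) : cocycleIncl P Y (n+1) (((homCx P Y).fromOpcycles (n+1) n).unop.hom g) = P.complex.d (n+1) n ≫ g :=
    congr_arg (fun f => (ModuleCat.Hom.hom (Quiver.Hom.unop f)) g) ((homCx P Y).p_fromOpcycles (n+1) n)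
  constructor
  · intro hz
    obtain ⟨g, hg⟩ := h2 z hz
    exact ⟨g, (h3 g).symm.trans (congr_arg _ hg)⟩
  · rintro ⟨g, hg⟩
    rw [← h3] at hg
    have := cocycleIncl_injective _ _ _ hg
    rw [← this]
    exact congr_arg (fun f => (ModuleCat.Hom.hom (Quiver.Hom.unop f)) g) h0

lemma cocycleProj_eq_zero_iff_zero (z) : cocycleProj P Y 0 z = 0 ↔
    cocycleIncl P Y 0 z = 0 := by
  have : IsIso ((homCx P Y).homologyι 0) := inferInstance
  have h2 : Function.Injective (cocycleProj P Y 0) :=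
     (ModuleCat.mono_iff_injective _).1 (inferInstanceAs (Mono ((homCx P Y).homologyι 0).unop))
  rw [map_eq_zero_iff _ h2, map_eq_zero_iff _ (cocycleIncl_injective _ _ _)]

lemma smul_extMk (f : P.complex.X n ⟶ Y) (hf : P.complex.d (n+1) n ≫ f = 0) (r : R) :
    P.extMk (r • f) (n+1) rfl (by simp [hf]) = r • P.extMk f (n+1) rfl hf := by
  rw [Abelian.Ext.smul_eq_comp_mk₀, ProjectiveResolution.extMk_comp_mk₀]
  simp

/-- The degree `0` case of `ProjectiveResolution.extMk_eq_zero_iff`: there are no coboundaries. -/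
lemma extMk_zero_iff (f : P.complex.X 0 ⟶ Y) (hf : P.complex.d 1 0 ≫ f = 0) :
    P.extMk f 1 rfl hf = 0 ↔ f = 0 := by
  refine ⟨fun h => ?_, fun h => by simp [h]⟩
  rw [← P.extEquivCohomologyClass.apply_eq_iff_eq,
    ProjectiveResolution.extEquivCohomologyClass_extMk, ProjectiveResolution.extEquivCohomologyClass_zero,
    CochainComplex.HomComplex.CohomologyClass.mk_eq_zero_iff,
    CochainComplex.HomComplex.Cocycle.toSingleMk_mem_coboundaries_iff _ _ _ _ _ 1 (by simp)] at h
  obtain ⟨g, hg⟩ := h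
  have hz : IsZero (P.cochainComplex.X 1) := P.cochainComplex.isZero_of_isStrictlyLE 0 1 (by simp)
  rw [hz.eq_of_src g 0, comp_zero] at hg
  rw [← cancel_epi (P.cochainComplexXIso (-((0:ℕ):ℤ)) 0 rfl).hom, comp_zero, ← hg]

/-- The class in `Ext X Y n` (defined through the derived category) of an `n`-cocycle of
`Hom(P, Y)`. -/
noncomputable def cocycleToExt : (unop ((homCx P Y).opcycles n) : ModuleCat R) →ₗ[R] Abelian.Ext X Y n where
  toFun z := P.extMk (cocycleIncl P Y n z) (n+1) rfl (d_cocycleIncl P Y n z)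
  map_add' x y := by rw [P.add_extMk]; simp
  map_smul' r x := by
    simp only [RingHom.id_apply]
    rw [← smul_extMk]; simp

lemma cocycleToExt_surjective : Function.Surjective (cocycleToExt P Y n) := by
  intro a
  obtain ⟨f, hf, rfl⟩ := P.extMk_surjective a (n+1) rfl
  obtain ⟨z, rfl⟩ := exists_cocycleIncl P Y n f hf
  exact ⟨z, rfl⟩

/-- Cohomology and `Ext` are the quotient of the cocycles by the same submodule. -/
lemma ker_eq : LinearMap.ker (cocycleProj P Y n) = LinearMap.ker (cocycleToExt P Y n) := by
  ext z
  simp only [LinearMap.mem_ker]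
  cases n with
  | zero => rw [cocycleProj_eq_zero_iff_zero]; exact (extMk_zero_iff P Y _ (d_cocycleIncl P Y 0 z)).symm
  | succ n => rw [cocycleProj_eq_zero_iff_succ]; exact (P.extMk_eq_zero_iff _ _ rfl (d_cocycleIncl P Y (n+1) z) n rfl).symm

/-- The cohomology of `Hom(P, Y)` is the derived-category `Ext`. -/
noncomputable def homologyEquivExt : (unop ((homCx P Y).homology n) : ModuleCat R) ≃ₗ[R] Abelian.Ext X Y n :=
  ((cocycleProj P Y n).quotKerEquivOfSurjective (cocycleProj_surjective P Y n)).symm ≪≫ₗ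
    Submodule.quotEquivOfEq _ _ (ker_eq P Y n) ≪≫ₗ
    (cocycleToExt P Y n).quotKerEquivOfSurjective (cocycleToExt_surjective P Y n)

lemma homologyEquivExt_proj (z) : homologyEquivExt P Y n (cocycleProj P Y n z) = cocycleToExt P Y n z := by
  have : ((cocycleProj P Y n).quotKerEquivOfSurjective (cocycleProj_surjective P Y n)).symm (cocycleProj P Y n z) = Submodule.Quotient.mk z := by
    rw [LinearEquiv.symm_apply_eq]; rfl
  simp only [homologyEquivExt, LinearEquiv.trans_apply, this]
  rfl

/-- The comparison between the derived functor `Ext` used by `localCohomology` and the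
derived-category `Ext`, depending on a projective resolution of `X`. -/
noncomputable def extEquiv : ((_root_.Ext R (ModuleCat.{u} R) n).obj (op X)).obj Y ≃ₗ[R] Abelian.Ext X Y n :=
  (P.isoLeftDerivedObj ((linearYoneda R _).obj Y).rightOp n).unop.symm.toLinearEquiv ≪≫ₗ
    homologyEquivExt P Y n

lemma homologyEquivExt_naturality {X' : ModuleCat.{u} R} {P' : ProjectiveResolution X'} {g : X' ⟶ X}
    (φ : ProjectiveResolution.Hom P' P g) (w : (unop ((homCx P Y).homology n) : ModuleCat R)) :
    homologyEquivExt P' Y n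
      ((HomologicalComplex.homologyMap ((((linearYoneda R (ModuleCat.{u} R)).obj Y).rightOp.mapHomologicalComplex _).map φ.hom) n).unop.hom w) =
    (Abelian.Ext.mk₀ g).comp (homologyEquivExt P Y n w) (zero_add n) := by
  obtain ⟨z, rfl⟩ := cocycleProj_surjective P Y n w
  set ψ := (((linearYoneda R (ModuleCat.{u} R)).obj Y).rightOp.mapHomologicalComplex _).map φ.hom with hψ
  have h1 := congr_arg (fun f => (ModuleCat.Hom.hom (Quiver.Hom.unop f)) z) (HomologicalComplex.homologyι_naturality ψ n)
  have h2 := congr_arg (fun f => (ModuleCat.Hom.hom (Quiver.Hom.unop f)) z) (HomologicalComplex.p_opcyclesMap ψ n)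
  change (HomologicalComplex.homologyMap ψ n).unop.hom (cocycleProj P Y n z) = cocycleProj P' Y n ((HomologicalComplex.opcyclesMap ψ n).unop.hom z) at h1
  change cocycleIncl P' Y n ((HomologicalComplex.opcyclesMap ψ n).unop.hom z) = φ.hom.f n ≫ cocycleIncl P Y n z at h2
  rw [h1, homologyEquivExt_proj, homologyEquivExt_proj]
  simp only [cocycleToExt, LinearMap.coe_mk, AddHom.coe_mk]
  rw [ProjectiveResolution.mk₀_comp_extMk _ _ _ _ φ]
  simp only [h2]

lemma extEquiv_naturality {X' : ModuleCat.{u} R} (P' : ProjectiveResolution X') (g : X' ⟶ X)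
    (w : ((_root_.Ext R (ModuleCat.{u} R) n).obj (op X)).obj Y) :
    extEquiv P' Y n ((((_root_.Ext R (ModuleCat.{u} R) n).map g.op).app Y).hom w) =
    (Abelian.Ext.mk₀ g).comp (extEquiv P Y n w) (zero_add n) := by
  let φ : ProjectiveResolution.Hom P' P g := ⟨ProjectiveResolution.lift g P' P,
    (ProjectiveResolution.lift_commutes_zero g P' P).trans (by simp)⟩
  have h := ProjectiveResolution.isoLeftDerivedObj_inv_naturality g P' P φ.hom φ.hom_f_zero_comp_π_f_zero ((linearYoneda R _).obj Y).rightOp n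
  have h1 := congr_arg (fun f => (ModuleCat.Hom.hom (Quiver.Hom.unop f)) w) h
  exact (congr_arg (homologyEquivExt P' Y n) h1).trans (homologyEquivExt_naturality P Y n φ _)
end Compare

/-! ### Local cohomology as a direct limit of Ext modules -/

section HH
variable (I : Ideal R)

/-- The module `R / I ^ t`. -/
noncomputable abbrev quotPow (t : ℕ) : ModuleCat.{u} R := ModuleCat.of R (R ⧸ I ^ t)

/-- The projection `R / I ^ s ⟶ R / I ^ t` for `t ≤ s`. -/
noncomputable def quotPowMap {t s : ℕ} (h : t ≤ s) : quotPow I s ⟶ quotPow I t :=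
  ModuleCat.ofHom (Submodule.mapQ _ _ LinearMap.id (Ideal.pow_le_pow_right h))

lemma quotPowMap_comp {t s r : ℕ} (h : t ≤ s) (h' : s ≤ r) :
    quotPowMap I h' ≫ quotPowMap I h = quotPowMap I (h.trans h') := by
  ext
  rfl

lemma quotPowMap_self {t : ℕ} (h : t ≤ t) : quotPowMap I h = 𝟙 _ := by
  ext
  rfl

variable (n : ℕ) (M : ModuleCat.{u} R)

/-- The transition map `Ext(R / I ^ t, M) → Ext(R / I ^ s, M)` of the system defining local
cohomology. -/
noncomputable def trans (t s : ℕ) (h : t ≤ s) :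
    Abelian.Ext (quotPow I t) M n →ₗ[R] Abelian.Ext (quotPow I s) M n :=
  Abelian.Ext.precompOfLinear (Abelian.Ext.mk₀ (quotPowMap I h)) R M (zero_add n)

lemma trans_apply {t s : ℕ} (h : t ≤ s) (ξ) : trans I n M t s h ξ =
    (Abelian.Ext.mk₀ (quotPowMap I h)).comp ξ (zero_add n) := rfl

instance : DirectedSystem (fun t => Abelian.Ext (quotPow I t) M n) (fun t s h => trans I n M t s h) where
  map_self t x := by simp [trans_apply, quotPowMap_self]
  map_map k j i h h' x := by
    simp only [trans_apply]
    rw [← Abelian.Ext.comp_assoc _ _ _ (zero_add 0) (by simp) (by simp), Abelian.Ext.mk₀_comp_mk₀, quotPowMap_comp]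

/-- Local cohomology as the direct limit over `t` of the derived-category `Ext(R / I ^ t, M)`. -/
noncomputable abbrev HH : Type u :=
  Module.DirectLimit (fun t => Abelian.Ext (quotPow I t) M n) (trans I n M)

/-- The structure map from the derived functor `Ext(R / I ^ t, M)` to the colimit
`localCohomology I n`, evaluated at `M`. -/
noncomputable def lcι (t : ℕ) : ((_root_.Ext R (ModuleCat.{u} R) n).obj (op (quotPow I t))).obj M ⟶
   (localCohomology I n).obj M :=
  have := localCohomology.hasColimitDiagram (localCohomology.idealPowersDiagram I) n
  (colimit.ι (localCohomology.diagram (localCohomology.idealPowersDiagram I) n) (op (op t))).app M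

lemma lcι_w {t s : ℕ} (h : t ≤ s) :
    ((_root_.Ext R (ModuleCat.{u} R) n).map (quotPowMap I h).op).app M ≫ lcι I n M s = lcι I n M t := by
  have := localCohomology.hasColimitDiagram (localCohomology.idealPowersDiagram I) n
  exact congr_arg (fun f => NatTrans.app f M) (colimit.w (localCohomology.diagram (localCohomology.idealPowersDiagram I) n) (homOfLE h).op.op)

instance : PreservesFilteredColimitsOfSize.{0, 0} (forget (ModuleCat.{u} R)) :=
  preservesFilteredColimitsOfSize_shrink.{0, u, 0, u} _

instance (F : (ℕᵒᵖ)ᵒᵖ ⥤ ModuleCat.{u} R) : PreservesColimit F (forget (ModuleCat.{u} R)) :=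
  inferInstance

lemma lcι_exists (x : (localCohomology I n).obj M) : ∃ t y, (lcι I n M t).hom y = x := by
  have := localCohomology.hasColimitDiagram (localCohomology.idealPowersDiagram I) n
  obtain ⟨j, y, h⟩ := Concrete.isColimit_exists_rep _ (isColimitOfPreserves ((evaluation _ _).obj M) (colimit.isColimit (localCohomology.diagram (localCohomology.idealPowersDiagram I) n))) x
  exact ⟨j.unop.unop, y, h⟩

lemma lcι_eq_zero (t : ℕ) (y) (h : (lcι I n M t).hom y = 0) :
    ∃ s, ∃ h : t ≤ s, (((_root_.Ext R (ModuleCat.{u} R) n).map (quotPowMap I h).op).app M).hom y = 0 := by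
  have := localCohomology.hasColimitDiagram (localCohomology.idealPowersDiagram I) n
  have hD := (isColimitOfPreserves ((evaluation _ _).obj M) (colimit.isColimit (localCohomology.diagram (localCohomology.idealPowersDiagram I) n)))
  obtain ⟨k, f, g, e⟩ := Concrete.isColimit_exists_of_rep_eq _ hD (i := op (op t)) (j := op (op t)) y 0 (h.trans (map_zero (lcι I n M t).hom).symm)
  refine ⟨k.unop.unop, leOfHom f.unop.unop, e.trans ?_⟩
  exact map_zero (ConcreteCategory.hom (((localCohomology.diagram (localCohomology.idealPowersDiagram I) n ⋙ (evaluation _ _).obj M).map g)))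

/-- A chosen projective resolution of `R / I ^ t`. -/
noncomputable def res (t : ℕ) : ProjectiveResolution (quotPow I t) := projectiveResolution _

/-- The structure map `Ext(R / I ^ t, M) → H^n_I(M)` on the derived-category `Ext`. -/
noncomputable def lcOf (t : ℕ) : Abelian.Ext (quotPow I t) M n →ₗ[R] (localCohomology I n).obj M :=
  (lcι I n M t).hom ∘ₗ (extEquiv (res I t) M n).symm.toLinearMap

lemma lcOf_trans {t s : ℕ} (h : t ≤ s) (ξ) : lcOf I n M s (trans I n M t s h ξ) = lcOf I n M t ξ := by
  obtain ⟨w, rfl⟩ := (extEquiv (res I t) M n).surjective ξ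
  rw [trans_apply, ← extEquiv_naturality (res I t) M n (res I s) (quotPowMap I h) w]
  simp only [lcOf, LinearMap.comp_apply, LinearEquiv.coe_coe, LinearEquiv.symm_apply_apply]
  exact congr_arg (fun f => ModuleCat.Hom.hom f w) (lcι_w I n M h)

/-- The comparison map from `HH` to Mathlib's local cohomology. -/
noncomputable def toLC : HH I n M →ₗ[R] (localCohomology I n).obj M :=
  Module.DirectLimit.lift R ℕ _ _ (lcOf I n M) (fun _ _ h ξ => lcOf_trans I n M h ξ)

lemma toLC_bijective : Function.Bijective (toLC I n M) := by
  constructor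
  · rw [injective_iff_map_eq_zero]
    intro z hz
    obtain ⟨t, ξ, rfl⟩ := Module.DirectLimit.exists_of z
    obtain ⟨w, rfl⟩ := (extEquiv (res I t) M n).surjective ξ
    rw [toLC, Module.DirectLimit.lift_of] at hz
    simp only [lcOf, LinearMap.comp_apply, LinearEquiv.coe_coe, LinearEquiv.symm_apply_apply] at hz
    obtain ⟨s, h, e⟩ := lcι_eq_zero I n M t w hz
    rw [← Module.DirectLimit.of_f (hij := h), trans_apply,
      ← extEquiv_naturality (res I t) M n (res I s) (quotPowMap I h) w]
    erw [e]
    simp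
  · intro x
    obtain ⟨t, y, rfl⟩ := lcι_exists I n M x
    refine ⟨Module.DirectLimit.of _ _ _ _ t (extEquiv (res I t) M n y), ?_⟩
    rw [toLC, Module.DirectLimit.lift_of]
    simp [lcOf]

/-- `HH I n M` is the local cohomology module `H^n_I(M)`. -/
noncomputable def lcEquiv : HH I n M ≃ₗ[R] (localCohomology I n).obj M :=
  LinearEquiv.ofBijective _ (toLC_bijective I n M)
end HH

/-! ### Short exact sequences of modules -/

section SC
variable {A B C : Type u} [AddCommGroup A] [Module R A] [AddCommGroup B] [Module R B]
  [AddCommGroup C] [Module R C]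

/-- The short complex `A → B → C` of modules given by linear maps with zero composite. -/
noncomputable abbrev sc (f : A →ₗ[R] B) (g : B →ₗ[R] C) (h : g ∘ₗ f = 0) : ShortComplex (ModuleCat.{u} R) :=
  ShortComplex.mk (ModuleCat.ofHom f) (ModuleCat.ofHom g) (by ext x; exact LinearMap.congr_fun h x)

lemma sc_shortExact (f : A →ₗ[R] B) (g : B →ₗ[R] C) (h : g ∘ₗ f = 0) (hf : Function.Injective f)
    (hg : Function.Surjective g) (hfg : ∀ x, g x = 0 → ∃ y, f y = x) : (sc f g h).ShortExact where
  exact := (ShortComplex.moduleCat_exact_iff _).2 hfg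
  mono_f := (ModuleCat.mono_iff_injective _).2 hf
  epi_g := (ModuleCat.epi_iff_surjective _).2 hg

/-- The short complex `ker p → A → B` of a linear map `p : A → B`. -/
noncomputable abbrev scKer (p : A →ₗ[R] B) : ShortComplex (ModuleCat.{u} R) :=
  sc (LinearMap.ker p).subtype p (LinearMap.comp_ker_subtype p)

lemma scKer_shortExact (p : A →ₗ[R] B) (hp : Function.Surjective p) : (scKer p).ShortExact :=
  sc_shortExact _ _ _ Subtype.val_injective hp fun x hx => ⟨(⟨x, hx⟩ : LinearMap.ker p), rfl⟩

/-- The morphism between the kernel complexes of `p` and `q` induced by a commutative square. -/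
noncomputable def scKerMap {A' B' : Type u} [AddCommGroup A'] [Module R A'] [AddCommGroup B']
    [Module R B'] (p : A →ₗ[R] B) (q : A' →ₗ[R] B') (a : A →ₗ[R] A') (b : B →ₗ[R] B')
    (h : q ∘ₗ a = b ∘ₗ p) : scKer p ⟶ scKer q where
  τ₁ := ModuleCat.ofHom (a.restrict (p := LinearMap.ker p) (q := LinearMap.ker q) fun x hx => by
    have := LinearMap.congr_fun h x
    simp only [LinearMap.comp_apply, LinearMap.mem_ker] at *
    rw [this, hx, map_zero])
  τ₂ := ModuleCat.ofHom a
  τ₃ := ModuleCat.ofHom b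
  comm₁₂ := by ext; rfl
  comm₂₃ := ModuleCat.hom_ext h
end SC

/-! ### Functoriality and long exact sequences -/

section Map
variable (I : Ideal R) {M N L: ModuleCat.{u} R}

/-- The map on local cohomology induced by Yoneda composition with a class `β ∈ Ext(M, N)`. It
covers functoriality (`β` of degree `0`) and connecting maps (`β` the class of an extension). -/
noncomputable def HHmap {n a m : ℕ} (β : Abelian.Ext M N a) (h : n + a = m) : HH I n M →ₗ[R] HH I m N :=
  Module.DirectLimit.map (fun t => Abelian.Ext.postcompOfLinear β R (quotPow I t) h) (by
    intro t s hts
    ext ξ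
    exact Abelian.Ext.comp_assoc _ _ _ (zero_add n) h (by lia))

/-- The structure map of the direct limit `HH`. -/
noncomputable abbrev HHof (n : ℕ) (M : ModuleCat.{u} R) (t : ℕ) : Abelian.Ext (quotPow I t) M n →ₗ[R] HH I n M :=
  Module.DirectLimit.of R ℕ (fun t => Abelian.Ext (quotPow I t) M n) (trans I n M) t

lemma HHmap_of {n a m : ℕ} (β : Abelian.Ext M N a) (h : n + a = m) (t : ℕ) (ξ) :
    HHmap I β h (HHof I n M t ξ) = HHof I m N t (ξ.comp β h) :=
  Module.DirectLimit.map_apply_of _ _ _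

lemma HHof_trans (n : ℕ) {t s : ℕ} (h : t ≤ s) (ξ : Abelian.Ext (quotPow I t) M n) :
    HHof I n M s ((Abelian.Ext.mk₀ (quotPowMap I h)).comp ξ (zero_add n)) = HHof I n M t ξ :=
  Module.DirectLimit.of_f (hij := h)

lemma HH_exists (n : ℕ) (z : HH I n M) : ∃ t ξ, HHof I n M t ξ = z := Module.DirectLimit.exists_of z

lemma HHof_eq_zero (n : ℕ) {t : ℕ} {ξ} (h : HHof I n M t ξ = 0) :
    ∃ s, ∃ h : t ≤ s, (Abelian.Ext.mk₀ (quotPowMap I h)).comp ξ (zero_add n) = 0 :=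
  Module.DirectLimit.of.zero_exact h

lemma HHmap_smul_id (n : ℕ) (x : R) (z : HH I n M) :
    HHmap I (Abelian.Ext.mk₀ (x • 𝟙 M)) (add_zero n) z = x • z := by
  obtain ⟨t, ξ, rfl⟩ := HH_exists I n z
  rw [HHmap_of, Abelian.Ext.mk₀_smul, Abelian.Ext.comp_smul, Abelian.Ext.comp_mk₀_id, map_smul]

/-- Every element of `H^n_I(M)` is killed by a power of `I`. -/
lemma HH_torsion (n : ℕ) (z : HH I n M) : ∃ t, ∀ r ∈ I ^ t, r • z = 0 := by
  obtain ⟨t, ξ, rfl⟩ := HH_exists I n z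
  refine ⟨t, fun r hr => ?_⟩
  have h0 : r • 𝟙 (quotPow I t) = 0 := by
    ext
    exact (Submodule.Quotient.mk_eq_zero (I ^ t)).2 (Ideal.mul_mem_right _ _ hr)
  have : r • ξ = (Abelian.Ext.mk₀ (r • 𝟙 (quotPow I t))).comp ξ (zero_add n) := by
    rw [Abelian.Ext.mk₀_smul, Abelian.Ext.smul_comp, Abelian.Ext.mk₀_id_comp]
  rw [← map_smul, this, h0, Abelian.Ext.mk₀_zero, Abelian.Ext.zero_comp, map_zero]

/-- Exactness of the long exact sequence of local cohomology at the middle term. -/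
lemma HH_exact₂ {S : ShortComplex (ModuleCat.{u} R)} (hS : S.ShortExact) (n : ℕ) (z : HH I n S.X₂)
    (hz : HHmap I (Abelian.Ext.mk₀ S.g) (add_zero n) z = 0) :
    ∃ y, HHmap I (Abelian.Ext.mk₀ S.f) (add_zero n) y = z := by
  obtain ⟨t, ξ, rfl⟩ := HH_exists I n z
  rw [HHmap_of] at hz
  obtain ⟨s, h, e⟩ := HHof_eq_zero I n hz
  rw [← Abelian.Ext.comp_assoc _ _ _ (zero_add n) (by lia) (by lia)] at e
  obtain ⟨η, hη⟩ := Abelian.Ext.covariant_sequence_exact₂ _ hS _ e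
  refine ⟨HHof I n _ s η, ?_⟩
  rw [HHmap_of, hη, HHof_trans]

/-- Exactness of the long exact sequence of local cohomology at `H^{n+1}_I(S.X₁)`. -/
lemma HH_exact₁ {S : ShortComplex (ModuleCat.{u} R)} (hS : S.ShortExact) (n : ℕ) (z : HH I (n+1) S.X₁)
    (hz : HHmap I (Abelian.Ext.mk₀ S.f) (add_zero (n+1)) z = 0) :
    ∃ y : HH I n S.X₃, HHmap I hS.extClass rfl y = z := by
  obtain ⟨t, ξ, rfl⟩ := HH_exists I _ z
  rw [HHmap_of] at hz
  obtain ⟨s, h, e⟩ := HHof_eq_zero I _ hz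
  rw [← Abelian.Ext.comp_assoc _ _ _ (zero_add _) (by lia) (by lia)] at e
  obtain ⟨η, hη⟩ := Abelian.Ext.covariant_sequence_exact₁ _ hS _ e rfl
  refine ⟨HHof I n _ s η, ?_⟩
  rw [HHmap_of, hη, HHof_trans]
end Map

/-- Naturality of the connecting map of `Ext(-, T)`: if the pullback of `η` along `φ.τ₁` is zero,
so is the pullback along `φ.τ₃` of the image of `η` under the connecting map. -/
lemma comp_extClass_comp_eq_zero {S S' : ShortComplex (ModuleCat.{u} R)} (hS : S.ShortExact)
    (hS' : S'.ShortExact) (φ : S ⟶ S') {T : ModuleCat.{u} R} {n m : ℕ} (η : Abelian.Ext S'.X₁ T n)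
    (h : 1 + n = m) (h0 : (Abelian.Ext.mk₀ φ.τ₁).comp η (zero_add n) = 0) :
    (Abelian.Ext.mk₀ φ.τ₃).comp (hS'.extClass.comp η h) (zero_add m) = 0 := by
  subst h
  rw [← Abelian.Ext.comp_assoc _ _ _ (zero_add 1) rfl (by omega),
    ← ShortComplex.ShortExact.extClass_naturality hS hS' φ,
    Abelian.Ext.comp_assoc _ _ _ (add_zero 1) (zero_add n) (by omega), h0, Abelian.Ext.comp_zero]

/-! ### Vanishing on torsion modules -/

section Vanish
variable [IsNoetherianRing R] (I : Ideal R)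

/-- The Artin–Rees lemma, in the form: the `I`-adic topology of `F` induces that of `K`. -/
lemma artinRees {F : Type u} [AddCommGroup F] [Module R F] [Module.Finite R F] (K : Submodule R F) (s : ℕ) :
    ∃ m, ∀ x : K, (x : F) ∈ I ^ m • (⊤ : Submodule R F) → x ∈ I ^ s • (⊤ : Submodule R K) := by
  obtain ⟨k, hk⟩ := Ideal.exists_pow_inf_eq_pow_smul I K
  refine ⟨s + k, fun x hx => ?_⟩
  have h1 : (x : F) ∈ I ^ (s + k) • (⊤ : Submodule R F) ⊓ K := ⟨hx, x.2⟩
  rw [hk _ (Nat.le_add_left k s), Nat.add_sub_cancel] at h1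
  have h2 : (x : F) ∈ I ^ s • K := Submodule.smul_mono le_rfl inf_le_right h1
  have h3 : Submodule.map K.subtype (I ^ s • (⊤ : Submodule R K)) = I ^ s • K := by
    rw [Submodule.map_smul'', Submodule.map_top, Submodule.range_subtype]
  rw [← h3] at h2
  obtain ⟨y, hy, hyx⟩ := h2
  rwa [← Subtype.ext hyx]

/-- For `T` killed by a power of `I`, every class `ξ ∈ Ext(N, T)` with `N` finitely generated dies
on all maps landing in `I ^ s N`, for some `s`. Dimension shifting along a free cover of `N`, with
Artin–Rees controlling the kernel of the cover. -/
lemma restrict_eq_zero (T : ModuleCat.{u} R) (k : ℕ) (hT : ∀ r ∈ I ^ k, ∀ x : T, r • x = 0) (n : ℕ) :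
    ∀ (N : Type u) [AddCommGroup N] [Module R N] [Module.Finite R N] (ξ : Abelian.Ext (ModuleCat.of R N) T n),
    ∃ s, ∀ (A : Type u) [AddCommGroup A] [Module R A] (j : A →ₗ[R] N),
      (∀ a, j a ∈ I ^ s • (⊤ : Submodule R N)) →
      (Abelian.Ext.mk₀ (ModuleCat.ofHom j)).comp ξ (zero_add n) = 0 := by
  induction n with
  | zero =>
    intro N _ _ _ ξ
    refine ⟨k, fun A _ _ j hj => ?_⟩
    obtain ⟨f, rfl⟩ := Abelian.Ext.homEquiv₀.symm.surjective ξ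
    rw [Abelian.Ext.homEquiv₀_symm_apply, Abelian.Ext.mk₀_comp_mk₀]
    have : ModuleCat.ofHom j ≫ f = 0 := by
      ext a
      change f.hom (j a) = 0
      have h1 : I ^ k • (⊤ : Submodule R N) ≤ LinearMap.ker f.hom := by
        rw [Submodule.smul_le]
        intro r hr x _
        rw [LinearMap.mem_ker, map_smul]
        exact hT r hr _
      exact h1 (hj a)
    rw [this, Abelian.Ext.mk₀_zero]
  | succ n ih =>
    intro N _ _ _ ξ
    obtain ⟨d, π, hπ⟩ := Module.Finite.exists_fin' R N
    have hSF := scKer_shortExact π hπ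
    have hP : Projective (ModuleCat.of R (Fin d → R)) := inferInstance
    obtain ⟨η, hη⟩ := Abelian.Ext.contravariant_sequence_exact₃ hSF T ξ
      (Abelian.Ext.eq_zero_of_projective (P := ModuleCat.of R (Fin d → R)) _) (add_comm 1 n)
    obtain ⟨s', hs'⟩ := ih _ η
    obtain ⟨s, hs⟩ := artinRees I (LinearMap.ker (π : (Fin d → R) →ₗ[R] N)) s'
    refine ⟨s, fun A _ _ j hj => ?_⟩
    have hmap : ∀ x ∈ I ^ s • (⊤ : Submodule R (Fin d → R)), π x ∈ I ^ s • (⊤ : Submodule R N) := by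
      intro x hx
      have := Submodule.mem_map_of_mem (f := π) hx
      rw [Submodule.map_smul''] at this
      exact Submodule.smul_mono le_rfl le_top this
    set p : ↥(I ^ s • (⊤ : Submodule R (Fin d → R))) →ₗ[R] ↥(I ^ s • (⊤ : Submodule R N)) :=
      π.restrict hmap with hp
    have hps : Function.Surjective p := by
      rintro ⟨y, hy⟩
      have h3 : Submodule.map π (I ^ s • (⊤ : Submodule R (Fin d → R))) = I ^ s • ⊤ := by
        rw [Submodule.map_smul'', Submodule.map_top, LinearMap.range_eq_top.2 hπ]
      rw [← h3] at hy
      obtain ⟨x, hx, e⟩ := hy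
      exact ⟨⟨x, hx⟩, Subtype.ext e⟩
    have hSE := scKer_shortExact p hps
    let φ : scKer p ⟶ scKer π :=
      scKerMap p π (Submodule.subtype _) (Submodule.subtype _) (LinearMap.ext fun _ => rfl)
    have hi := hs' (LinearMap.ker p) φ.τ₁.hom (fun x => hs _ x.1.2)
    have key : (Abelian.Ext.mk₀ (ModuleCat.ofHom (Submodule.subtype (I ^ s • (⊤ : Submodule R N))))).comp ξ (zero_add _) = 0 := by
      rw [← hη]
      exact comp_extClass_comp_eq_zero hSE hSF φ η (add_comm 1 n) hi
    have hfac : ModuleCat.ofHom j = ModuleCat.ofHom (j.codRestrict (I ^ s • (⊤ : Submodule R N)) hj) ≫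
      ModuleCat.ofHom (Submodule.subtype (I ^ s • (⊤ : Submodule R N))) := rfl
    rw [hfac, ← Abelian.Ext.mk₀_comp_mk₀, Abelian.Ext.comp_assoc _ _ _ (zero_add 0) (zero_add _) (by lia), key, Abelian.Ext.comp_zero]

/-- Local cohomology in positive degree vanishes on modules killed by a power of `I`. Writing a
class in `Ext(R / I ^ t, T)` as the image of a class `η ∈ Ext(I ^ t, T)`, the restriction of `η` to
`I ^ (s + t) = I ^ s I ^ t` is zero for some `s` by `restrict_eq_zero`. -/
lemma HH_eq_zero (T : ModuleCat.{u} R) (k : ℕ) (hT : ∀ r ∈ I ^ k, ∀ x : T, r • x = 0) (n : ℕ)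
    (z : HH I (n+1) T) : z = 0 := by
  obtain ⟨t, ξ, rfl⟩ := HH_exists I _ z
  have hS (t : ℕ) := sc_shortExact (Submodule.subtype (I ^ t)) (Submodule.mkQ (I ^ t)) (LinearMap.ext fun x => (Submodule.Quotient.mk_eq_zero _).2 x.2)
    (Subtype.val_injective) (Submodule.mkQ_surjective _) (fun x hx => ⟨⟨x, (Submodule.Quotient.mk_eq_zero _).1 hx⟩, rfl⟩)
  have hP : Projective (ModuleCat.of R R) := inferInstance
  obtain ⟨η, hη⟩ := Abelian.Ext.contravariant_sequence_exact₃ (hS t) T ξ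
      (Abelian.Ext.eq_zero_of_projective (P := ModuleCat.of R R) _) (add_comm 1 n)
  obtain ⟨s, hs⟩ := restrict_eq_zero I T k hT n _ η
  have hle : I ^ (s + t) ≤ I ^ t := Ideal.pow_le_pow_right (Nat.le_add_left t s)
  have hi := hs _ (Submodule.inclusion hle) (by
    rintro ⟨a, ha⟩
    have h3 : Submodule.map (Submodule.subtype (I ^ t)) (I ^ s • (⊤ : Submodule R (I ^ t : Ideal R))) = I ^ (s + t) := by
      rw [Submodule.map_smul'', Submodule.map_top, Submodule.range_subtype, pow_add]; rfl
    have ha' := ha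
    rw [← h3] at ha'
    obtain ⟨y, hy, e⟩ := ha'
    have : Submodule.inclusion hle ⟨a, ha⟩ = y := Subtype.ext e.symm
    rwa [this])
  let φ : sc (Submodule.subtype (I ^ (s+t))) (Submodule.mkQ (I ^ (s+t))) (LinearMap.ext fun x => (Submodule.Quotient.mk_eq_zero _).2 x.2) ⟶
    sc (Submodule.subtype (I ^ t)) (Submodule.mkQ (I ^ t)) (LinearMap.ext fun x => (Submodule.Quotient.mk_eq_zero _).2 x.2) :=
    { τ₁ := ModuleCat.ofHom (Submodule.inclusion hle)
      τ₂ := 𝟙 _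
      τ₃ := quotPowMap I (Nat.le_add_left t s)
      comm₁₂ := by ext; rfl
      comm₂₃ := by ext; rfl }
  rw [← HHof_trans I _ (Nat.le_add_left t s), ← hη]
  exact (congr_arg (HHof I (n+1) T (s+t))
    (comp_extClass_comp_eq_zero (hS (s+t)) (hS t) φ η (add_comm 1 n) hi)).trans (map_zero _)
end Vanish

/-! ### Serre classes and extension classes -/

section Serre
variable {S S₁ S₂ : ∀ (M : Type u) [AddCommGroup M] [Module R M], Prop}
variable {M N : Type u} [AddCommGroup M] [Module R M] [AddCommGroup N] [Module R N]

lemma serre_of_injective (h : IsSerreClass R S) (f : M →ₗ[R] N) (hf : Function.Injective f) (hN : S N) :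
    S M :=
  h.isoClosed _ _ (LinearEquiv.ofInjective f hf).symm (h.subClosed _ _ hN)

lemma serre_of_surjective (h : IsSerreClass R S) (f : M →ₗ[R] N) (hf : Function.Surjective f) (hM : S M) :
    S N :=
  h.isoClosed _ _ (f.quotKerEquivOfSurjective hf) (h.quotClosed _ _ hM)

/-- Extension classes of Serre classes are closed under submodules. -/
lemma ext_of_injective (h₁ : IsSerreClass R S₁) (h₂ : IsSerreClass R S₂) (f : M →ₗ[R] N)
    (hf : Function.Injective f) (hN : ExtensionClass S₁ S₂ N) : ExtensionClass S₁ S₂ M := by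
  obtain ⟨K, hK, hQ⟩ := hN
  refine ⟨K.comap f, serre_of_injective h₁ (f.restrict (p := K.comap f) (q := K) fun _ hx => hx) ?_ hK,
    serre_of_injective h₂ ((K.comap f).mapQ K f le_rfl) ?_ hQ⟩
  · intro a b hab
    exact Subtype.ext (hf (congr_arg Subtype.val hab))
  · rw [← LinearMap.ker_eq_bot, Submodule.ker_mapQ]
    exact Submodule.mkQ_map_self _

/-- Extension classes of Serre classes are closed under quotients. -/
lemma ext_of_surjective (h₁ : IsSerreClass R S₁) (h₂ : IsSerreClass R S₂) (f : M →ₗ[R] N)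
    (hf : Function.Surjective f) (hM : ExtensionClass S₁ S₂ M) : ExtensionClass S₁ S₂ N := by
  obtain ⟨K, hK, hQ⟩ := hM
  refine ⟨K.map f, serre_of_surjective h₁ (f.submoduleMap K) (f.submoduleMap_surjective K) hK,
    serre_of_surjective h₂ (K.mapQ (K.map f) f (Submodule.le_comap_map f K)) ?_ hQ⟩
  intro y
  obtain ⟨y, rfl⟩ := Submodule.Quotient.mk_surjective _ y
  obtain ⟨x, rfl⟩ := hf y
  exact ⟨Submodule.Quotient.mk x, rfl⟩

/-- A Serre class with a nonzero member contains the residue field, which is a quotient of any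
nonzero cyclic module. -/
lemma serre_residue [IsLocalRing R] (h : IsSerreClass R S) (hE : ∃ E : ModuleCat.{u} R, S E ∧ Nontrivial E) :
    S (R ⧸ IsLocalRing.maximalIdeal R) := by
  obtain ⟨E, hE, _⟩ := hE
  obtain ⟨x, hx⟩ := exists_ne (0 : E)
  have hle : LinearMap.ker (LinearMap.toSpanSingleton R E x) ≤ IsLocalRing.maximalIdeal R := by
    refine IsLocalRing.le_maximalIdeal fun htop => hx ?_
    have : (1 : R) ∈ LinearMap.ker (LinearMap.toSpanSingleton R E x) := htop ▸ Submodule.mem_top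
    simpa using this
  have h1 : S (R ⧸ LinearMap.ker (LinearMap.toSpanSingleton R E x)) :=
    serre_of_injective h ((LinearMap.toSpanSingleton R E x).range.subtype ∘ₗ
      (LinearMap.toSpanSingleton R E x).quotKerEquivRange.toLinearMap)
      (Subtype.val_injective.comp (LinearEquiv.injective _)) hE
  exact serre_of_surjective h (Submodule.factor hle) (Submodule.factor_surjective hle) h1

lemma serre_finiteLength [IsLocalRing R] (h : IsSerreClass R S)
    (hE : ∃ E : ModuleCat.{u} R, S E ∧ Nontrivial E) (hM : IsFiniteLength R M) : S M := by
  induction hM with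
  | of_subsingleton => exact h.zeroMem _ inferInstance
  | @of_simple_quotient M _ _ K hs _ ih =>
    obtain ⟨J, hJ, ⟨e⟩⟩ := isSimpleModule_iff_quot_maximal.1 hs
    obtain rfl := IsLocalRing.eq_maximalIdeal hJ
    exact h.extClosed _ _ _ K.subtype K.mkQ K.subtype_injective K.mkQ_surjective (by simp) ih
      (h.isoClosed _ _ e.symm (serre_residue h hE))

lemma ext_finiteLength [IsLocalRing R] (h₁ : IsSerreClass R S₁) (h₂ : IsSerreClass R S₂)
    (hE : ∃ E : ModuleCat.{u} R, S₁ E ∧ Nontrivial E) (hM : IsFiniteLength R M) :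
    ExtensionClass S₁ S₂ M :=
  ⟨⊤, h₁.subClosed _ _ (serre_finiteLength h₁ hE hM), h₂.zeroMem _ inferInstance⟩

end Serre

lemma isFiniteLength_of_supportDim_le_zero [IsNoetherianRing R] (M : Type u) [AddCommGroup M] [Module R M]
    [Module.Finite R M] (h : Module.supportDim R M ≤ 0) : IsFiniteLength R M := by
  rw [Module.supportDim_eq_ringKrullDim_quotient_annihilator] at h
  have : IsArtinianRing (R ⧸ Module.annihilator R M) :=
    isArtinianRing_iff_krullDimLE_zero.2 (Ring.krullDimLE_iff.2 (by simpa using h))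
  have : IsArtinian R (R ⧸ Module.annihilator R M) :=
    isArtinian_of_surjective_algebraMap (R := R ⧸ Module.annihilator R M) Ideal.Quotient.mk_surjective
  let : Module (R ⧸ Module.annihilator R M) M := Module.quotientAnnihilator
  have : IsScalarTower R (R ⧸ Module.annihilator R M) M := ⟨fun r s m => by
    obtain ⟨s, rfl⟩ := Ideal.Quotient.mk_surjective s
    exact mul_smul r s m⟩
  have : Module.Finite (R ⧸ Module.annihilator R M) M := Module.Finite.of_restrictScalars_finite R _ M
  have : IsArtinian R M :=
    isArtinian_of_surjective_algebraMap (R := R ⧸ Module.annihilator R M) Ideal.Quotient.mk_surjective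
  exact isFiniteLength_iff_isNoetherian_isArtinian.2 ⟨inferInstance, inferInstance⟩

/-! ### Local cohomology in degree zero -/

section Zero
variable (I : Ideal R) (M : ModuleCat.{u} R)

/-- Evaluation at `1`, as a map `Ext(R / I ^ t, M) = Hom(R / I ^ t, M) → M` in degree `0`. -/
noncomputable def evOne (t : ℕ) : Abelian.Ext (quotPow I t) M 0 →ₗ[R] M :=
  LinearMap.applyₗ (Submodule.Quotient.mk 1 : R ⧸ I ^ t) ∘ₗ
    ((ModuleCat.homLinearEquiv (S := R)).toLinearMap ∘ₗ
      (Abelian.Ext.linearEquiv₀ (R := R) (X := quotPow I t) (Y := M)).toLinearMap)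

lemma evOne_mk₀ (t : ℕ) (f : quotPow I t ⟶ M) :
    evOne I M t (Abelian.Ext.mk₀ f) = f.hom (Submodule.Quotient.mk 1 : R ⧸ I ^ t) := by
  have : Abelian.Ext.linearEquiv₀ (R := R) (Abelian.Ext.mk₀ f) = f :=
    (Abelian.Ext.linearEquiv₀ (R := R)).apply_symm_apply f
  simp only [evOne, LinearMap.comp_apply, LinearEquiv.coe_coe, this]
  rfl

lemma exists_mk₀ {X Y : ModuleCat.{u} R} (ξ : Abelian.Ext X Y 0) : ∃ f, Abelian.Ext.mk₀ f = ξ :=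
  ⟨_, Abelian.Ext.mk₀_homEquiv₀_apply ξ⟩

/-- `H^0_I(M)` embeds in `M`, as `Γ_I(M)`. -/
lemma HH_zero_embeds : ∃ f : HH I 0 M →ₗ[R] M, Function.Injective f := by
  refine ⟨Module.DirectLimit.lift R ℕ _ (trans I 0 M) (evOne I M) ?_, ?_⟩
  · intro t s h ξ
    obtain ⟨f, rfl⟩ := exists_mk₀ ξ
    rw [trans_apply, Abelian.Ext.mk₀_comp_mk₀, evOne_mk₀, evOne_mk₀]
    rfl
  · refine Module.DirectLimit.lift_injective _ _ fun t => ?_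
    intro ξ η h
    obtain ⟨f, rfl⟩ := exists_mk₀ ξ
    obtain ⟨g, rfl⟩ := exists_mk₀ η
    rw [evOne_mk₀, evOne_mk₀] at h
    congr 1
    ext
    exact h

end Zero

/-! ### Reduction modulo the torsion submodule -/

/-- `Γ_I(M)`, the submodule of elements killed by a power of `I`. -/
def gam (I : Ideal R) (M : Type u) [AddCommGroup M] [Module R M] : Submodule R M where
  carrier := {x | ∃ t, ∀ r ∈ I ^ t, r • x = 0}
  zero_mem' := ⟨0, by simp⟩
  add_mem' := by
    rintro a b ⟨s, hs⟩ ⟨t, ht⟩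
    refine ⟨s + t, fun r hr => ?_⟩
    rw [smul_add, hs r (Ideal.pow_le_pow_right (by lia) hr), ht r (Ideal.pow_le_pow_right (by lia) hr), add_zero]
  smul_mem' := by
    rintro c a ⟨s, hs⟩
    exact ⟨s, fun r hr => by rw [smul_comm, hs r hr, smul_zero]⟩

section Step
variable [IsNoetherianRing R] (I : Ideal R) (M : Type u) [AddCommGroup M] [Module R M] [Module.Finite R M]

/-- In a finitely generated module, a single power of `I` kills all of `Γ_I(M)`. -/
lemma gam_killed : ∃ k, ∀ r ∈ I ^ k, ∀ x : gam I M, r • x = 0 := by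
  obtain ⟨s, hs⟩ : (⊤ : Submodule R (gam I M)).FG := Module.Finite.fg_top
  choose f hf using fun x : gam I M => x.2
  refine ⟨s.sup f, fun r hr x => ?_⟩
  have : (⊤ : Submodule R (gam I M)) ≤ LinearMap.ker (LinearMap.lsmul R (gam I M) r) := by
    rw [← hs, Submodule.span_le]
    intro y hy
    exact Subtype.ext (hf y r (Ideal.pow_le_pow_right (Finset.le_sup hy) hr))
  exact this (Submodule.mem_top (x := x))

/-- `M / Γ_I(M)` has no nonzero element killed by `I`. -/
lemma eq_zero_of_smul_quot (x : M ⧸ gam I M) (hx : ∀ r ∈ I, r • x = 0) : x = 0 := by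
  obtain ⟨x, rfl⟩ := Submodule.Quotient.mk_surjective _ x
  obtain ⟨k, hk⟩ := gam_killed I M
  refine (Submodule.Quotient.mk_eq_zero _).2 ⟨k + 1, fun r hr => ?_⟩
  have h1 : ∀ r ∈ I, r • x ∈ gam I M := fun r hr => (Submodule.Quotient.mk_eq_zero _).1 (hx r hr)
  rw [pow_succ] at hr
  induction hr using Submodule.mul_induction_on' with
  | mem_mul_mem a ha b hb =>
    rw [mul_smul]
    exact congr_arg Subtype.val (hk a ha ⟨_, h1 b hb⟩)
  | add a _ b _ h h' => rw [add_smul, h, h', add_zero]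

/-- `I` contains a nonzerodivisor on `M / Γ_I(M)`, since `Hom(R / I, M / Γ_I(M)) = 0`. -/
lemma exists_regular : ∃ r ∈ I, IsSMulRegular (M ⧸ gam I M) r := by
  have := (IsSMulRegular.subsingleton_linearMap_iff (R := R) (M := M ⧸ gam I M) (N := R ⧸ I)).1 ?_
  · simpa [Ideal.annihilator_quotient] using this
  · refine subsingleton_of_forall_eq 0 fun f => ?_
    ext
    refine eq_zero_of_smul_quot I M _ fun r hr => ?_
    have : (r • (Submodule.Quotient.mk 1 : R ⧸ I)) = 0 :=
      (Submodule.Quotient.mk_eq_zero I).2 (by simpa using hr)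
    exact (f.map_smul r _).symm.trans ((congr_arg f this).trans f.map_zero)

/-- In positive degrees, passing to `M / Γ_I(M)` is injective on local cohomology, since
`Γ_I(M)` has no local cohomology there. -/
lemma HH_quot_gam_injective (n : ℕ) :
    ∃ f : HH I (n+1) (ModuleCat.of R M) →ₗ[R] HH I (n+1) (ModuleCat.of R (M ⧸ gam I M)),
      Function.Injective f := by
  have hS := sc_shortExact (gam I M).subtype (gam I M).mkQ (by ext; simp) (Submodule.subtype_injective _)
    (Submodule.mkQ_surjective _) (fun x hx => ⟨⟨x, (Submodule.Quotient.mk_eq_zero _).1 hx⟩, rfl⟩)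
  refine ⟨HHmap I (Abelian.Ext.mk₀ (ModuleCat.ofHom (gam I M).mkQ)) (add_zero _), ?_⟩
  rw [injective_iff_map_eq_zero]
  intro z hz
  obtain ⟨y, rfl⟩ := HH_exact₂ I hS _ z hz
  obtain ⟨k, hk⟩ := gam_killed I M
  rw [HH_eq_zero I _ k hk n y, map_zero]

end Step

/-! ### The induction -/

section Main
open scoped Pointwise
variable (I : Ideal R)
  {S₁ S₂ : ∀ (M : Type u) [AddCommGroup M] [Module R M], Prop}

/-- If `x ∈ I` is `L`-regular, then `(0 : I)` in `H^{n+1}_I(L)` is killed by `x`, hence lies in the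
image of the connecting map from `H^n_I(L / xL)`; condition `(C_I)` then applies. -/
lemma HH_mem_of_regular (h₁ : IsSerreClass R S₁) (h₂ : IsSerreClass R S₂)
    (hC : SatisfiesCondC I (ExtensionClass S₁ S₂)) (n : ℕ) (L : Type u) [AddCommGroup L] [Module R L]
    (x : R) (hx : x ∈ I) (reg : IsSMulRegular L x)
    (ih : ExtensionClass S₁ S₂ (HH I n (ModuleCat.of R (QuotSMulTop x L)))) :
    ExtensionClass S₁ S₂ (HH I (n+1) (ModuleCat.of R L)) := by
  have hS := sc_shortExact (LinearMap.lsmul R L x) (x • (⊤ : Submodule R L)).mkQ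
    (by
      ext y
      exact (Submodule.Quotient.mk_eq_zero _).2 (Submodule.smul_mem_pointwise_smul _ _ _ Submodule.mem_top))
    reg (Submodule.mkQ_surjective _) (fun y hy => by
      obtain ⟨z, -, hz⟩ := (Submodule.Quotient.mk_eq_zero _).1 hy
      exact ⟨z, hz⟩)
  let δ : HH I n (ModuleCat.of R (QuotSMulTop x L)) →ₗ[R] HH I (n+1) (ModuleCat.of R L) :=
    HHmap I hS.extClass rfl
  let K : Submodule R (HH I (n+1) (ModuleCat.of R L)) := Submodule.torsionBySet R _ (I : Set R)
  have hK : ∀ y, y ∈ K ↔ ∀ r ∈ I, r • y = 0 := fun y => by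
    simp [K, Submodule.mem_torsionBySet_iff]
  refine hC _ (HH_torsion I (n+1)) K hK ?_
  have hle : K ≤ LinearMap.range δ := by
    intro y hy
    refine HH_exact₁ I hS n y ?_
    have := HHmap_smul_id I (n+1) x y
    rw [(hK y).1 hy x hx] at this
    exact this
  exact ext_of_injective h₁ h₂ (Submodule.inclusion hle) (Submodule.inclusion_injective hle)
    (ext_of_surjective h₁ h₂ δ.rangeRestrict δ.surjective_rangeRestrict ih)

/-- Induction on the bound `n` for the dimension. A bound, rather than equality, is needed because
`dim M / Γ_I(M)` can be smaller than `dim M`. -/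
theorem HH_mem [IsNoetherianRing R] [IsLocalRing R] (h₁ : IsSerreClass R S₁) (h₂ : IsSerreClass R S₂)
    (hE : ∃ E : ModuleCat.{u} R, S₁ E ∧ Nontrivial E)
    (hC : SatisfiesCondC I (ExtensionClass S₁ S₂)) (n : ℕ) :
    ∀ (M : Type u) [AddCommGroup M] [Module R M] [Module.Finite R M], Module.supportDim R M ≤ n →
      ExtensionClass S₁ S₂ (HH I n (ModuleCat.of R M)) := by
  induction n with
  | zero =>
    intro M _ _ _ hM
    obtain ⟨f, hf⟩ := HH_zero_embeds I (ModuleCat.of R M)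
    exact ext_of_injective h₁ h₂ f hf
      (ext_finiteLength h₁ h₂ hE (isFiniteLength_of_supportDim_le_zero M (by simpa using hM)))
  | succ n ih =>
    intro M _ _ _ hM
    obtain ⟨f, hf⟩ := HH_quot_gam_injective I M n
    obtain ⟨x, hx, reg⟩ := exists_regular I M
    refine ext_of_injective h₁ h₂ f hf (HH_mem_of_regular I h₁ h₂ hC n _ x hx reg (ih _ ?_))
    have h1 := Module.supportDim_quotSMulTop_succ_le_of_notMem_minimalPrimes (R := R)
      (M := M ⧸ gam I M) (fun _ ↦ reg.notMem_of_mem_minimalPrimes)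
    have h2 := h1.trans ((Module.supportDim_le_of_surjective _ (gam I M).mkQ_surjective).trans hM)
    rw [Nat.cast_succ] at h2
    exact (ENat.WithBot.add_le_add_one_right_iff).1 h2

end Main

end LCTop
end

/-- Over a noetherian local ring, if the Serre classes `S₁` and `S₂` each contain a nonzero
module and the extension class `(S₁, S₂)` satisfies condition `(C_I)`, then for every finitely
generated module `M` of Krull dimension `n = dim M`, the top local cohomology module
`H^n_I(M)` belongs to `(S₁, S₂)`. -/
theorem localCohomology_top_mem_extensionClass
    {R : Type u} [CommRing R] [IsNoetherianRing R] [IsLocalRing R] (I : Ideal R)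
    (S₁ S₂ : ∀ (M : Type u) [AddCommGroup M] [Module R M], Prop)
    (h₁ : IsSerreClass R S₁) (h₂ : IsSerreClass R S₂)
    (hS₁ : ∃ E : ModuleCat.{u} R, S₁ E ∧ Nontrivial E)
    (hS₂ : ∃ E : ModuleCat.{u} R, S₂ E ∧ Nontrivial E)
    (hC : SatisfiesCondC I (ExtensionClass S₁ S₂))
    (M : Type u) [AddCommGroup M] [Module R M] [Module.Finite R M]
    (n : ℕ) (hn : Order.krullDim ↥(Module.support R M) = (n : WithBot ℕ∞)) :
    ExtensionClass S₁ S₂ ↥((localCohomology I n).obj (ModuleCat.of R M)) :=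
  LCTop.ext_of_injective h₁ h₂ (LCTop.lcEquiv I n (ModuleCat.of R M)).symm.toLinearMap
    (LinearEquiv.injective _) (LCTop.HH_mem I h₁ h₂ hS₁ hC n M hn.le)
end
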